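/- arXiv:1604.03220 — 3 statements merged into one kernel-verified Lean document; each statement's English description precedes it below -/
import Mathlib

section
/- Second de Casteljau algorithm for (p,q)-Bézier curves: let n ≥ 1, let p, q be reals with 0 < q < p, let d ≥ 1, and let P_0, …, P_n ∈ ℝ^d. Fix a real t and define recursively R_i^0 = P_i for i = 0, …, n, and R_i^k = q^i (p^{n−k−i} − q^{n−k−i} t) R_i^{k−1} + p^{n−k} t R_{i+1}^{k−1} for k = 1, …, n and i = 0, …, n−k. Then R_0^n = p^{n(n−1)/2} Σ_{i=0}^{n} P_i B_i^n(t;p,q). -/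
/-- The (p,q)-integer `[n]_{p,q} = Σ_{j=0}^{n-1} p^{n-1-j} q^j`. -/
noncomputable def pqInt (p q : ℝ) (n : ℕ) : ℝ :=
  ∑ j ∈ Finset.range n, p ^ (n - 1 - j) * q ^ j

/-- The (p,q)-factorial `[n]_{p,q}! = ∏_{j=1}^{n} [j]_{p,q}`. -/
noncomputable def pqFact (p q : ℝ) : ℕ → ℝ
  | 0 => 1
  | n + 1 => pqFact p q n * pqInt p q (n + 1)

/-- The (p,q)-binomial coefficient `[n choose k]_{p,q}`. -/
noncomputable def pqBinom (p q : ℝ) (n k : ℕ) : ℝ :=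
  pqFact p q n / (pqFact p q k * pqFact p q (n - k))

/-- The (p,q)-Bernstein basis function
`B_k^n(t;p,q) = p^{k(k-1)/2 - n(n-1)/2} [n choose k]_{p,q} t^k ∏_{s=0}^{n-k-1} (p^s - q^s t)`. -/
noncomputable def pqBernstein (p q : ℝ) (n k : ℕ) (t : ℝ) : ℝ :=
  p ^ (k * (k - 1) / 2) / p ^ (n * (n - 1) / 2) * pqBinom p q n k * t ^ k *
    ∏ s ∈ Finset.range (n - k), (p ^ s - q ^ s * t)

lemma pqInt_add (p q : ℝ) (a b : ℕ) :
    pqInt p q (a + b) = q ^ a * pqInt p q b + p ^ b * pqInt p q a := by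
  unfold pqInt
  rw [Finset.sum_range_add, Finset.mul_sum, Finset.mul_sum, add_comm]
  congr 1
  · refine Finset.sum_congr rfl fun j hj => ?_
    rw [show a + b - 1 - (a + j) = b - 1 - j by omega]
    ring
  · refine Finset.sum_congr rfl fun j hj => ?_
    have := Finset.mem_range.1 hj
    rw [show a + b - 1 - j = b + (a - 1 - j) by omega]
    ring

lemma pqInt_pos (p q : ℝ) (hp : 0 < p) (hq : 0 < q) (n : ℕ) : 0 < pqInt p q (n + 1) := by
  unfold pqInt
  exact Finset.sum_pos (fun j _ => by positivity) ⟨0, by simp⟩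

lemma pqFact_pos (p q : ℝ) (hp : 0 < p) (hq : 0 < q) (n : ℕ) : 0 < pqFact p q n := by
  induction n with
  | zero => simp [pqFact]
  | succ n ih => exact mul_pos ih (pqInt_pos p q hp hq n)

/-- Pascal rule. -/
lemma pqBinom_pascal (p q : ℝ) (hp : 0 < p) (hq : 0 < q) (i j : ℕ) :
    pqBinom p q (i + 1 + j + 1) (i + 1) =
      q ^ (i + 1) * pqBinom p q (i + 1 + j) (i + 1) +
        p ^ (j + 1) * pqBinom p q (i + 1 + j) i := by
  unfold pqBinom
  rw [show i + 1 + j + 1 - (i + 1) = j + 1 by omega, show i + 1 + j - (i + 1) = j by omega,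
    show i + 1 + j - i = j + 1 by omega]
  have h1 : pqFact p q (i + 1 + j + 1) = pqFact p q (i + 1 + j) *
      (q ^ (i + 1) * pqInt p q (j + 1) + p ^ (j + 1) * pqInt p q (i + 1)) := by
    rw [← pqInt_add]; rfl
  have h2 : pqFact p q (i + 1) = pqFact p q i * pqInt p q (i + 1) := rfl
  have h3 : pqFact p q (j + 1) = pqFact p q j * pqInt p q (j + 1) := rfl
  rw [h1, h2, h3]
  have := (pqFact_pos p q hp hq i).ne'
  have := (pqFact_pos p q hp hq j).ne'
  have := (pqInt_pos p q hp hq i).ne'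
  have := (pqInt_pos p q hp hq j).ne'
  field_simp

/-- The unnormalised Bernstein function. -/
noncomputable def pqC (p q t : ℝ) (m i : ℕ) : ℝ :=
  p ^ (i * (i - 1) / 2) * pqBinom p q m i * t ^ i *
    ∏ s ∈ Finset.range (m - i), (p ^ s - q ^ s * t)

lemma tri_succ (i : ℕ) : (i + 1) * (i + 1 - 1) / 2 = i * (i - 1) / 2 + i := by
  rw [← Finset.sum_range_id, ← Finset.sum_range_id, Finset.sum_range_succ]

lemma pqC_zero (p q t : ℝ) (hp : 0 < p) (hq : 0 < q) (m : ℕ) :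
    pqC p q t (m + 1) 0 = pqC p q t m 0 * (q ^ 0 * (p ^ (m - 0) - q ^ (m - 0) * t)) := by
  have := (pqFact_pos p q hp hq m).ne'
  have := (pqFact_pos p q hp hq (m + 1)).ne'
  have h : pqFact p q 0 = 1 := rfl
  simp [pqC, pqBinom, h, Finset.prod_range_succ, *]

lemma pqC_last (p q t : ℝ) (hp : 0 < p) (hq : 0 < q) (m : ℕ) :
    pqC p q t (m + 1) (m + 1) = pqC p q t m m * (p ^ m * t) := by
  have := (pqFact_pos p q hp hq m).ne'
  have := (pqFact_pos p q hp hq (m + 1)).ne'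
  have h : pqFact p q 0 = 1 := rfl
  unfold pqC
  rw [tri_succ]
  simp [pqBinom, h, *]
  ring

lemma pqC_mid (p q t : ℝ) (hp : 0 < p) (hq : 0 < q) (m i : ℕ) (hi : i < m) :
    pqC p q t (m + 1) (i + 1) =
      pqC p q t m (i + 1) * (q ^ (i + 1) * (p ^ (m - (i + 1)) - q ^ (m - (i + 1)) * t)) +
      pqC p q t m i * (p ^ m * t) := by
  obtain ⟨j, rfl⟩ : ∃ j, m = i + 1 + j := ⟨m - (i + 1), by omega⟩
  unfold pqC
  rw [pqBinom_pascal p q hp hq, tri_succ, show i + 1 + j + 1 - (i + 1) = j + 1 by omega,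
    show i + 1 + j - (i + 1) = j by omega,
    show i + 1 + j - i = j + 1 by omega, Finset.prod_range_succ]
  ring

/-- the second de Casteljau algorithm for (p,q)-Bézier curves.
With `R_i^0 = P_i` and
`R_i^k = q^i (p^{n-k-i} - q^{n-k-i} t) R_i^{k-1} + p^{n-k} t R_{i+1}^{k-1}`,
one has `R_0^n = p^{n(n-1)/2} Σ_{i=0}^{n} P_i B_i^n(t;p,q)`. -/
theorem pq_deCasteljau_second (n d : ℕ) (hn : 1 ≤ n) (hd : 1 ≤ d)
    (p q : ℝ) (h0 : 0 < q) (hqp : q < p)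
    (P : ℕ → Fin d → ℝ) (t : ℝ) (R : ℕ → ℕ → Fin d → ℝ)
    (hR0 : ∀ i ≤ n, R 0 i = P i)
    (hR : ∀ k, 1 ≤ k → k ≤ n → ∀ i ≤ n - k,
      R k i = (q ^ i * (p ^ (n - k - i) - q ^ (n - k - i) * t)) • R (k - 1) i +
        (p ^ (n - k) * t) • R (k - 1) (i + 1)) :
    R n 0 = (p ^ (n * (n - 1) / 2) : ℝ) •
      ∑ i ∈ Finset.range (n + 1), pqBernstein p q n i t • P i := by
  have hp : 0 < p := h0.trans hqp
  have key : ∀ m ≤ n, R n 0 = ∑ i ∈ Finset.range (m + 1), pqC p q t m i • R (n - m) i := by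
    intro m
    induction m with
    | zero => intro _; simp [pqC, pqBinom, pqFact]
    | succ m ih =>
      intro hm
      rw [ih (by omega)]
      have hstep : ∀ i ∈ Finset.range (m + 1), pqC p q t m i • R (n - m) i =
          (pqC p q t m i * (q ^ i * (p ^ (m - i) - q ^ (m - i) * t))) • R (n - (m + 1)) i +
          (pqC p q t m i * (p ^ m * t)) • R (n - (m + 1)) (i + 1) := by
        intro i hi
        have hi' := Finset.mem_range.1 hi
        rw [hR (n - m) (by omega) (by omega) i (by omega), show n - (n - m) = m by omega,
          show n - m - 1 = n - (m + 1) by omega, smul_add, smul_smul, smul_smul]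
      rw [Finset.sum_congr rfl hstep, Finset.sum_add_distrib, Finset.sum_range_succ',
        Finset.sum_range_succ _ m, Finset.sum_range_succ' _ (m + 1), Finset.sum_range_succ _ m,
        pqC_zero p q t hp h0, pqC_last p q t hp h0]
      have hmid : ∀ i ∈ Finset.range m, pqC p q t (m + 1) (i + 1) • R (n - (m + 1)) (i + 1) = _ :=
        fun i hi => by
          rw [pqC_mid p q t hp h0 m i (Finset.mem_range.1 hi), add_smul]
      rw [Finset.sum_congr rfl hmid, Finset.sum_add_distrib]
      abel
  rw [key n le_rfl, Finset.smul_sum]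
  refine Finset.sum_congr rfl fun i hi => ?_
  rw [Nat.sub_self, hR0 i (by have := Finset.mem_range.1 hi; omega), smul_smul]
  congr 1
  unfold pqC pqBernstein
  have hne : p ^ (n * (n - 1) / 2) ≠ 0 := (pow_pos hp _).ne'
  generalize p ^ (n * (n - 1) / 2) = x at hne
  generalize ∏ s ∈ Finset.range (n - i), (p ^ s - q ^ s * t) = y
  field_simp
end

section
/- n! recursive evaluation algorithms for (p,q)-Bézier curves: let n ≥ 1, let p, q be reals with 0 < q < p, let d ≥ 1, let P_0, …, P_n ∈ ℝ^d, and let σ be a permutation of {1, …, n}. Fix a real t and define P_i^0 = P_i for i = 0, …, n, and P_i^{k+1} = (1 − t p^{i+1−σ(k+1)} q^{σ(k+1)−1−i}) P_i^k + t p^{i+1−σ(k+1)} q^{σ(k+1)−1−i} P_{i+1}^k for k = 0, …, n−1 and i = 0, …, n−k−1. Then P_0^n = Σ_{i=0}^{n} P_i B_i^n(t;p,q). In particular, each of the n! permutations σ yields an affine-invariant recursive evaluation algorithm for the (p,q)-Bézier curve with control points P_0, …, P_n. -/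
theorem aux_pqInt_mul (p q : ℝ) (n : ℕ) : pqInt p q n * (p - q) = p ^ n - q ^ n := by
  have h := (Commute.all q p).geom_sum₂_mul n
  have e : pqInt p q n = ∑ i ∈ Finset.range n, q ^ i * p ^ (n - 1 - i) := by
    unfold pqInt
    exact Finset.sum_congr rfl fun _ _ => mul_comm _ _
  rw [e]
  linarith

theorem aux_pqInt_pos (p q : ℝ) (h0 : 0 < q) (hqp : q < p) (n : ℕ) : 0 < pqInt p q (n + 1) := by
  have hp : 0 < p := h0.trans hqp
  unfold pqInt
  exact Finset.sum_pos (fun i _ => by positivity) ⟨0, by simp⟩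

theorem aux_pqFact_pos (p q : ℝ) (h0 : 0 < q) (hqp : q < p) (n : ℕ) : 0 < pqFact p q n := by
  induction n with
  | zero => simp [pqFact]
  | succ n ih => exact mul_pos ih (aux_pqInt_pos p q h0 hqp n)

theorem aux_pqInt_split (p q : ℝ) (hqp : q < p) (k l : ℕ) :
    pqInt p q (k + l) = q ^ k * pqInt p q l + p ^ l * pqInt p q k := by
  have h : p - q ≠ 0 := by linarith
  apply mul_right_cancel₀ h
  have h1 := aux_pqInt_mul p q (k + l)
  have h2 := aux_pqInt_mul p q k
  have h3 := aux_pqInt_mul p q l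
  rw [h1, add_mul, mul_assoc, mul_assoc, h2, h3]
  ring

theorem aux_tri (m : ℕ) : (m + 1) * (m + 1 - 1) / 2 = m * (m - 1) / 2 + m := by
  have := Nat.triangle_succ m
  exact this

theorem aux_prod (p q : ℝ) (hp : 0 < p) (l : ℕ) (t : ℝ) :
    ∏ s ∈ Finset.range (l + 1), (p ^ s - q ^ s * t) =
      (1 - t) * p ^ l * ∏ s ∈ Finset.range l, (p ^ s - q ^ s * (t * (q / p))) := by
  rw [Finset.prod_range_succ']
  have : ∀ s ∈ Finset.range l, p ^ (s + 1) - q ^ (s + 1) * t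
      = p * (p ^ s - q ^ s * (t * (q / p))) := by
    intro s _
    field_simp
    ring
  rw [Finset.prod_congr rfl this, Finset.prod_mul_distrib]
  simp
  ring

theorem aux_bern_zero (p q : ℝ) (h0 : 0 < q) (hqp : q < p) (m : ℕ) (t : ℝ) :
    pqBernstein p q (m + 1) 0 t = (1 - t) * pqBernstein p q m 0 (t * (q / p)) := by
  have hp : 0 < p := h0.trans hqp
  have f1 := (aux_pqFact_pos p q h0 hqp m).ne'
  have f2 := (aux_pqInt_pos p q h0 hqp m).ne'
  unfold pqBernstein pqBinom
  rw [aux_tri, Nat.sub_zero, Nat.sub_zero, aux_prod p q hp]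
  generalize ∏ s ∈ Finset.range m, (p ^ s - q ^ s * (t * (q / p))) = Z
  simp only [pqFact]
  rw [pow_add]
  field_simp

theorem aux_bern_last (p q : ℝ) (h0 : 0 < q) (hqp : q < p) (m : ℕ) (t : ℝ) :
    pqBernstein p q (m + 1) (m + 1) t = t * pqBernstein p q m m t := by
  have hp : 0 < p := h0.trans hqp
  have f1 := (aux_pqFact_pos p q h0 hqp m).ne'
  have f2 := (aux_pqFact_pos p q h0 hqp (m + 1)).ne'
  have e : pqFact p q 0 = 1 := rfl
  unfold pqBernstein pqBinom
  rw [Nat.sub_self, Nat.sub_self, e]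
  field_simp
  simp [pow_succ']

theorem aux_bern_mid (p q : ℝ) (h0 : 0 < q) (hqp : q < p) (j l : ℕ) (t : ℝ) :
    pqBernstein p q (j + 1 + l + 1) (j + 1) t =
      (1 - t) * pqBernstein p q (j + 1 + l) (j + 1) (t * (q / p)) +
        t * pqBernstein p q (j + 1 + l) j t := by
  have hp : 0 < p := h0.trans hqp
  have f1 := (aux_pqFact_pos p q h0 hqp j).ne'
  have f2 := (aux_pqFact_pos p q h0 hqp l).ne'
  have f3 := (aux_pqInt_pos p q h0 hqp j).ne'
  have f4 := (aux_pqInt_pos p q h0 hqp l).ne'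
  have hs := aux_pqInt_split p q hqp (j + 1) (l + 1)
  unfold pqBernstein pqBinom
  have e1 : j + 1 + l + 1 - (j + 1) = l + 1 := by omega
  have e2 : j + 1 + l - (j + 1) = l := by omega
  have e3 : j + 1 + l - j = l + 1 := by omega
  rw [aux_tri (j + 1 + l), aux_tri j, e1, e2, e3, aux_prod p q hp]
  generalize ∏ s ∈ Finset.range l, (p ^ s - q ^ s * (t * (q / p))) = Z
  have g1 : pqFact p q (j + 1 + l + 1) = pqFact p q (j + 1 + l) * pqInt p q (j + 1 + (l + 1)) := rfl
  have g2 : pqFact p q (l + 1) = pqFact p q l * pqInt p q (l + 1) := rfl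
  have g3 : pqFact p q (j + 1) = pqFact p q j * pqInt p q (j + 1) := rfl
  rw [g1, g2, g3, hs]
  generalize pqFact p q (j + 1 + l) = F
  generalize (j + 1 + l) * (j + 1 + l - 1) / 2 = T
  generalize j * (j - 1) / 2 = T'
  generalize pqInt p q (j + 1) = a at *
  generalize pqInt p q (l + 1) = b at *
  generalize pqFact p q j = A at *
  generalize pqFact p q l = B at *
  simp only [pow_add, mul_pow, div_pow, pow_one]
  field_simp

open Polynomial in
/-- The weighted difference operator. -/
noncomputable def auxD (d : ℕ) (r : ℝ) : Module.End ℝ (ℕ → Fin d → ℝ) where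
  toFun f i := (r ^ i)⁻¹ • (f (i + 1) - f i)
  map_add' f g := by
    funext i; simp only [Pi.add_apply]; module
  map_smul' c f := by
    funext i; simp only [Pi.smul_apply, RingHom.id_apply]; module

open Polynomial in
theorem aux_step (d : ℕ) (r c : ℝ) (g : ℝ[X]) (f : ℕ → Fin d → ℝ) (i : ℕ) :
    aeval (auxD d r) ((1 + C c * X) * g) f i =
      (1 - c * (r ^ i)⁻¹) • aeval (auxD d r) g f i +
        (c * (r ^ i)⁻¹) • aeval (auxD d r) g f (i + 1) := by
  rw [map_mul, Module.End.mul_apply]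
  generalize aeval (auxD d r) g f = h
  have : aeval (auxD d r) (1 + C c * X) = 1 + c • auxD d r := by
    simp [Algebra.smul_def]
  rw [this]
  simp only [LinearMap.add_apply, Module.End.one_apply, LinearMap.smul_apply, Pi.add_apply,
    Pi.smul_apply, auxD, LinearMap.coe_mk, AddHom.coe_mk]
  module

open Polynomial in
theorem aux_eval (d : ℕ) (p q : ℝ) (h0 : 0 < q) (hqp : q < p) (f : ℕ → Fin d → ℝ) (m : ℕ) :
    ∀ (t : ℝ) (i : ℕ),
    aeval (auxD d (q / p)) (∏ s ∈ Finset.range m, (1 + C (t * (q / p) ^ s) * X)) f i =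
      ∑ j ∈ Finset.range (m + 1), pqBernstein p q m j (t * ((q / p) ^ i)⁻¹) • f (i + j) := by
  have hp : 0 < p := h0.trans hqp
  have hr : (q / p) ≠ 0 := (div_pos h0 hp).ne'
  induction m with
  | zero =>
    intro t i
    simp [pqBernstein, pqBinom, pqFact]
  | succ m ih =>
    intro t i
    have e : ∏ s ∈ Finset.range (m + 1), (1 + C (t * (q / p) ^ s) * X) =
        (1 + C t * X) * ∏ s ∈ Finset.range m, (1 + C ((t * (q / p)) * (q / p) ^ s) * X) := by
      rw [Finset.prod_range_succ', mul_comm]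
      congr 1
      · simp
      · refine Finset.prod_congr rfl fun s _ => ?_
        rw [pow_succ']
        ring_nf
    rw [e, aux_step, ih, ih]
    have e1 : t * (q / p) * ((q / p) ^ i)⁻¹ = t * ((q / p) ^ i)⁻¹ * (q / p) := by ring
    have e2 : t * (q / p) * ((q / p) ^ (i + 1))⁻¹ = t * ((q / p) ^ i)⁻¹ := by
      rw [pow_succ', mul_inv]
      field_simp
    rw [e1, e2]
    generalize t * ((q / p) ^ i)⁻¹ = u
    rw [Finset.sum_range_succ (fun j => pqBernstein p q m j u • f (i + 1 + j)),
      Finset.sum_range_succ' (fun j => pqBernstein p q m j (u * (q / p)) • f (i + j)),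
      Finset.sum_range_succ (fun j => pqBernstein p q (m + 1) j u • f (i + j)),
      Finset.sum_range_succ' (fun j => pqBernstein p q (m + 1) j u • f (i + j)),
      aux_bern_zero p q h0 hqp, aux_bern_last p q h0 hqp]
    have key : ∑ j ∈ Finset.range m, pqBernstein p q (m + 1) (j + 1) u • f (i + (j + 1)) =
        (1 - u) • ∑ j ∈ Finset.range m, pqBernstein p q m (j + 1) (u * (q / p)) • f (i + (j + 1))
        + u • ∑ j ∈ Finset.range m, pqBernstein p q m j u • f (i + 1 + j) := by
      rw [Finset.smul_sum, Finset.smul_sum, ← Finset.sum_add_distrib]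
      refine Finset.sum_congr rfl fun j hj => ?_
      obtain ⟨l, rfl⟩ := Nat.exists_eq_add_of_le (Nat.succ_le_of_lt (Finset.mem_range.mp hj))
      have := aux_bern_mid p q h0 hqp j l u
      rw [Nat.succ_eq_add_one, this, show i + 1 + j = i + (j + 1) by ring]
      module
    rw [key, show i + 1 + m = i + (m + 1) by ring]
    module

/-- `n!` recursive evaluation algorithms for (p,q)-Bézier curves.  For each
permutation `σ` of `{1, …, n}` (encoded as `σ : Equiv.Perm (Fin n)` with
`σ(k+1) - 1 = σ ⟨k, _⟩`), the recursion
`P_i^{k+1} = (1 - t p^{i+1-σ(k+1)} q^{σ(k+1)-1-i}) P_i^k + t p^{i+1-σ(k+1)} q^{σ(k+1)-1-i} P_{i+1}^k`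
starting from `P_i^0 = P_i` computes `P_0^n = Σ_{i=0}^{n} P_i B_i^n(t;p,q)`. -/
theorem pq_bezier_factorial_algorithms (n d : ℕ) (hn : 1 ≤ n) (hd : 1 ≤ d)
    (p q : ℝ) (h0 : 0 < q) (hqp : q < p)
    (P : ℕ → Fin d → ℝ) (σ : Equiv.Perm (Fin n)) (t : ℝ)
    (P' : ℕ → ℕ → Fin d → ℝ)
    (hP0 : ∀ i ≤ n, P' 0 i = P i)
    (hPrec : ∀ k, (hk : k < n) → ∀ i, i ≤ n - k - 1 →
      P' (k + 1) i =
        (1 - t * p ^ ((i : ℤ) - ((σ ⟨k, hk⟩ : Fin n) : ℕ)) *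
              q ^ ((((σ ⟨k, hk⟩ : Fin n) : ℕ) : ℤ) - (i : ℤ))) • P' k i +
          (t * p ^ ((i : ℤ) - ((σ ⟨k, hk⟩ : Fin n) : ℕ)) *
              q ^ ((((σ ⟨k, hk⟩ : Fin n) : ℕ) : ℤ) - (i : ℤ))) • P' k (i + 1)) :
    P' n 0 = ∑ i ∈ Finset.range (n + 1), pqBernstein p q n i t • P i := by
  classical
  have hp : 0 < p := h0.trans hqp
  have hr : (q / p) ≠ 0 := (div_pos h0 hp).ne'
  let c : ℕ → ℝ := fun k => if h : k < n then t * (q / p) ^ ((σ ⟨k, h⟩ : Fin n) : ℕ) else 0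
  have main : ∀ k, k ≤ n → ∀ i, i ≤ n - k → P' k i =
      Polynomial.aeval (auxD d (q / p))
        (∏ j ∈ Finset.range k, (1 + Polynomial.C (c j) * Polynomial.X)) P i := by
    intro k
    induction k with
    | zero =>
      intro _ i hi
      simpa using hP0 i hi
    | succ k ih =>
      intro hk i hi
      have hk' : k < n := hk
      rw [Finset.prod_range_succ, mul_comm, aux_step, hPrec k hk' i (by omega),
        ih hk'.le i (by omega), ih hk'.le (i + 1) (by omega)]
      have hw : t * p ^ ((i : ℤ) - ((σ ⟨k, hk'⟩ : Fin n) : ℕ)) *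
          q ^ ((((σ ⟨k, hk'⟩ : Fin n) : ℕ) : ℤ) - (i : ℤ)) = c k * ((q / p) ^ i)⁻¹ := by
        simp only [c, hk', dif_pos]
        rw [zpow_sub₀ hp.ne', zpow_sub₀ h0.ne']
        simp only [zpow_natCast, div_pow]
        field_simp
      rw [hw]
  rw [main n le_rfl 0 (by omega)]
  have hprod : ∏ j ∈ Finset.range n, (1 + Polynomial.C (c j) * Polynomial.X) =
      ∏ s ∈ Finset.range n, (1 + Polynomial.C (t * (q / p) ^ s) * Polynomial.X) := by
    rw [Finset.prod_range, Finset.prod_range,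
      ← Equiv.prod_comp σ (fun s : Fin n =>
        (1 + Polynomial.C (t * (q / p) ^ (s : ℕ)) * Polynomial.X))]
    refine Finset.prod_congr rfl fun j _ => ?_
    simp [c]
  rw [hprod, aux_eval d p q h0 hqp]
  simp
end

section
/- Marsden's identity for (p,q)-Bernstein bases: let n ≥ 1 and let p, q be reals with 0 < q < p. Then for all reals x and t, ∏_{i=1}^{n} (x − p^{n−i} q^{i−1} t) = Σ_{j=0}^{n} x^{n−j} ( ∏_{l=1}^{j} (x − p^{n−l} q^{l−1}) ) B_j^n(t;p,q), where the empty product (for j = 0) equals 1. -/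
/-- Gaussian binomials through Pascal's rule. -/
noncomputable def gBin (r : ℝ) : ℕ → ℕ → ℝ
  | _, 0 => 1
  | 0, _ + 1 => 0
  | n + 1, k + 1 => gBin r n (k + 1) + r ^ (n - k) * gBin r n k

/-- The `r`-integer. -/
noncomputable def gInt (r : ℝ) (n : ℕ) : ℝ := ∑ j ∈ Finset.range n, r ^ j

/-- The `r`-factorial. -/
noncomputable def gFact (r : ℝ) (n : ℕ) : ℝ := ∏ j ∈ Finset.range n, gInt r (j + 1)

lemma gBin_zero (r : ℝ) (n : ℕ) : gBin r n 0 = 1 := by cases n <;> simp [gBin]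

lemma gBin_gt (r : ℝ) (n : ℕ) : ∀ k, n < k → gBin r n k = 0 := by
  induction n with
  | zero => intro k hk; obtain ⟨k, rfl⟩ := Nat.exists_eq_succ_of_ne_zero hk.ne'; simp [gBin]
  | succ n ih =>
    intro k hk
    obtain ⟨k, rfl⟩ := Nat.exists_eq_succ_of_ne_zero (show k ≠ 0 by omega)
    simp [gBin, ih k (by omega), ih (k + 1) (by omega)]

lemma gInt_add (r : ℝ) (a b : ℕ) : gInt r (a + b) = gInt r a + r ^ a * gInt r b := by
  simp [gInt, Finset.sum_range_add, Finset.mul_sum, pow_add]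

lemma gFact_succ (r : ℝ) (n : ℕ) : gFact r (n + 1) = gFact r n * gInt r (n + 1) := by
  simp [gFact, Finset.prod_range_succ]

lemma gBin_fact (r : ℝ) (n : ℕ) : ∀ a b, a + b = n →
    gBin r n a * (gFact r a * gFact r b) = gFact r n := by
  induction n with
  | zero =>
    intro a b h
    obtain ⟨rfl, rfl⟩ : a = 0 ∧ b = 0 := by omega
    simp [gBin, gFact]
  | succ n ih =>
    intro a b h
    rcases a with _ | a
    · obtain rfl : b = n + 1 := by omega
      simp [gBin, gFact]
    · have h2 := ih a b (by omega)
      have hs : n - a = b := by omega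
      rw [gBin, hs, gFact_succ r n, gFact_succ r a]
      have hI : gInt r (n + 1) = gInt r b + r ^ b * gInt r (a + 1) := by
        rw [← gInt_add]; congr 1; omega
      rw [hI]
      rcases b with _ | b
      · rw [gBin_gt r n (a + 1) (by omega)]
        simp only [gInt, Finset.range_zero, Finset.sum_empty]
        rw [← h2]; ring
      · have h1 := ih (a + 1) b (by omega)
        rw [gFact_succ] at h1
        rw [gFact_succ] at h2 ⊢
        linear_combination gInt r (b + 1) * h1 + r ^ (b + 1) * gInt r (a + 1) * h2

/-- The one-parameter Marsden identity. -/
lemma g_marsden (r y t : ℝ) (n : ℕ) :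
    ∏ i ∈ Finset.range n, (y - r ^ i * t) =
      ∑ j ∈ Finset.range (n + 1), gBin r n j * (y ^ (n - j) * t ^ j *
        (∏ l ∈ Finset.range j, (y - r ^ l)) * ∏ s ∈ Finset.range (n - j), (1 - r ^ s * t)) := by
  induction n with
  | zero => simp [gBin]
  | succ n ih =>
    rw [Finset.prod_range_succ, ih, Finset.sum_range_succ' _ (n + 1)]
    simp only [gBin, add_mul, Finset.sum_add_distrib]
    set F : ℕ → ℝ := fun j => gBin r n j * (y ^ (n + 1 - j) * t ^ j *
        (∏ l ∈ Finset.range j, (y - r ^ l)) * ∏ s ∈ Finset.range (n + 1 - j), (1 - r ^ s * t))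
      with hF
    have e : ∑ j ∈ Finset.range (n + 1), F (j + 1) + F 0 = ∑ j ∈ Finset.range (n + 1), F j := by
      rw [← Finset.sum_range_succ', Finset.sum_range_succ _ (n + 1)]
      simp [hF, gBin_gt r n (n + 1) (by omega)]
    have e0 : F 0 = 1 * (y ^ (n + 1 - 0) * t ^ 0 *
        (∏ l ∈ Finset.range 0, (y - r ^ l)) * ∏ s ∈ Finset.range (n + 1 - 0), (1 - r ^ s * t)) := by
      simp only [hF, gBin_zero]
    rw [← e0, add_right_comm]
    change _ = ∑ j ∈ Finset.range (n + 1), F (j + 1) + F 0 + _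
    rw [e, ← Finset.sum_add_distrib, Finset.sum_mul]
    refine Finset.sum_congr rfl fun j hj => ?_
    obtain ⟨m, rfl⟩ := Nat.exists_eq_add_of_le (show j ≤ n by simp at hj; omega)
    have h1 : j + m + 1 - j = m + 1 := by omega
    have h2 : j + m + 1 - (j + 1) = m := by omega
    have h3 : j + m - j = m := by omega
    simp only [hF, h1, h2, h3, Finset.prod_range_succ]
    ring

lemma gInt_pos (r : ℝ) (hr : 0 < r) (n : ℕ) : 0 < gInt r (n + 1) :=
  Finset.sum_pos (fun _ _ => by positivity) (by simp)

lemma gFact_pos (r : ℝ) (hr : 0 < r) (n : ℕ) : 0 < gFact r n :=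
  Finset.prod_pos fun _ _ => gInt_pos r hr _

lemma pqFact_eq (p r : ℝ) (n : ℕ) :
    pqFact p (p * r) n = p ^ (n * (n - 1) / 2) * gFact r n := by
  induction n with
  | zero => simp [pqFact, gFact]
  | succ n ih =>
    rw [pqFact, ih, gFact_succ, Nat.triangle_succ, pow_add]
    have : pqInt p (p * r) (n + 1) = p ^ n * gInt r (n + 1) := by
      rw [pqInt, gInt, Finset.mul_sum]
      refine Finset.sum_congr rfl fun j hj => ?_
      obtain ⟨m, rfl⟩ := Nat.exists_eq_add_of_le (show j ≤ n by simp at hj; omega)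
      rw [show j + m + 1 - 1 - j = m by omega]
      ring
    rw [this]; ring

lemma prod_eq (p r t : ℝ) (n : ℕ) :
    ∏ s ∈ Finset.range n, (p ^ s - (p * r) ^ s * t) =
      p ^ (n * (n - 1) / 2) * ∏ s ∈ Finset.range n, (1 - r ^ s * t) := by
  induction n with
  | zero => simp
  | succ n ih =>
    rw [Finset.prod_range_succ, ih, Finset.prod_range_succ, Nat.triangle_succ, pow_add]
    ring

lemma pqBernstein_eq (p r t : ℝ) (hp : 0 < p) (hr : 0 < r) (n k : ℕ) (hk : k ≤ n) :
    pqBernstein p (p * r) n k t =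
      gBin r n k * t ^ k * ∏ s ∈ Finset.range (n - k), (1 - r ^ s * t) := by
  have h := gBin_fact r n k (n - k) (by omega)
  have h1 := (gFact_pos r hr k).ne'
  have h2 := (gFact_pos r hr (n - k)).ne'
  rw [pqBernstein, pqBinom, pqFact_eq, pqFact_eq, pqFact_eq, prod_eq, ← h]
  generalize ∏ s ∈ Finset.range (n - k), (1 - r ^ s * t) = P
  field_simp

/-- Marsden's identity for (p,q)-Bernstein bases:
`∏_{i=1}^{n} (x - p^{n-i} q^{i-1} t)
  = Σ_{j=0}^{n} x^{n-j} (∏_{l=1}^{j} (x - p^{n-l} q^{l-1})) B_j^n(t;p,q)`. -/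
theorem pq_marsden_identity (n : ℕ) (hn : 1 ≤ n) (p q : ℝ) (h0 : 0 < q) (hqp : q < p)
    (x t : ℝ) :
    ∏ i ∈ Finset.range n, (x - p ^ (n - 1 - i) * q ^ i * t) =
      ∑ j ∈ Finset.range (n + 1),
        x ^ (n - j) * (∏ l ∈ Finset.range j, (x - p ^ (n - 1 - l) * q ^ l)) *
          pqBernstein p q n j t := by
  obtain ⟨r, hr, rfl⟩ : ∃ r : ℝ, 0 < r ∧ q = p * r :=
    ⟨q / p, div_pos h0 (h0.trans hqp), by have := (h0.trans hqp).ne'; field_simp⟩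
  have hp : 0 < p := h0.trans hqp
  obtain ⟨N, rfl⟩ : ∃ N, n = N + 1 := ⟨n - 1, by omega⟩
  obtain ⟨y, rfl⟩ : ∃ y, x = p ^ N * y := ⟨x / p ^ N, by field_simp⟩
  have key : ∀ i, i ≤ N → p ^ (N + 1 - 1 - i) * (p * r) ^ i = p ^ N * r ^ i := by
    intro i hi
    obtain ⟨m, rfl⟩ := Nat.exists_eq_add_of_le hi
    rw [show i + m + 1 - 1 - i = m by omega]
    ring
  have hprod : ∀ (j : ℕ) (u : ℝ), j ≤ N + 1 →
      ∏ i ∈ Finset.range j, (p ^ N * y - p ^ (N + 1 - 1 - i) * (p * r) ^ i * u) =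
        (p ^ N) ^ j * ∏ i ∈ Finset.range j, (y - r ^ i * u) := by
    intro j u hj
    rw [← Finset.card_range j, ← Finset.prod_const, Finset.card_range, ← Finset.prod_mul_distrib]
    refine Finset.prod_congr rfl fun i hi => ?_
    rw [key i (by simp at hi; omega)]
    ring
  rw [hprod _ _ le_rfl, g_marsden, Finset.mul_sum]
  refine Finset.sum_congr rfl fun j hj => ?_
  have hj' : j ≤ N + 1 := by simp at hj; omega
  have h1 := hprod j 1 hj'
  simp only [mul_one] at h1
  rw [h1, pqBernstein_eq p r t hp hr _ _ hj', mul_pow]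
  have h2 : (p ^ N) ^ (N + 1) = (p ^ N) ^ (N + 1 - j) * (p ^ N) ^ j := by
    rw [← pow_add]; congr 1; omega
  rw [h2]
  ring
end
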